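/- There exists a 2-(24,4,1) packing with 42 blocks whose leave is a vertex-disjoint union of five cycles of length 3, one cycle of length 4, and one cycle of length 5, covering all 24 points (leave type 3^5 4^1 5^1). -/

import Mathlib

/-!
The packing is explicit. The points are labelled so that the cycles of the leave run through
consecutive labels: the triangles are `{0,1,2}, …, {12,13,14}`, the 4-cycle is `15, …, 18`
and the 5-cycle is `19, …, 23`. The 42 blocks in `blockList` decompose the complement of this
graph into copies of `K₄`. Two finite computations carry everything: two blocks share at most one
point (`blockList_pairwise`), and a pair of points is an edge of the leave exactly when one
point is the successor of the other on its cycle (`blockList_leave`). They are carried out on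
natural-number labels and then transferred to `Fin 24` and to the parametrization of
the cycles by `ZMod`.
-/


/-- A 2-(24,4,1) packing: a collection of 4-element blocks on 24 points such that
every pair of distinct points lies in at most one block. -/
def IsPacking (B : Finset (Finset (Fin 24))) : Prop :=
  (∀ b ∈ B, b.card = 4) ∧
  ∀ p q : Fin 24, p ≠ q → ∀ b₁ ∈ B, ∀ b₂ ∈ B,
    p ∈ b₁ → q ∈ b₁ → p ∈ b₂ → q ∈ b₂ → b₁ = b₂

/-- Adjacency in the leave of a packing: the pair of distinct points is covered by no block. -/
def LeaveAdj (B : Finset (Finset (Fin 24))) (p q : Fin 24) : Prop :=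
  p ≠ q ∧ ∀ b ∈ B, ¬ (p ∈ b ∧ q ∈ b)

/-- The leave of the packing `B` is a vertex-disjoint union of cycles whose lengths are
given by the list `L`, covering all 24 points. -/
def LeaveIsCycleType (B : Finset (Finset (Fin 24))) (L : List ℕ) : Prop :=
  ∃ f : (i : Fin L.length) → ZMod (L.get i) → Fin 24,
    Function.Bijective (fun x : Σ i : Fin L.length, ZMod (L.get i) => f x.1 x.2) ∧
    ∀ p q : Fin 24, LeaveAdj B p q ↔
      ∃ i k, (p = f i k ∧ q = f i (k + 1)) ∨ (q = f i k ∧ p = f i (k + 1))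

/-- The 42 blocks of the packing, each given by the list of its labels. -/
def blockList : List (List ℕ) :=
  [[0, 15, 17, 23], [3, 8, 13, 23], [6, 10, 12, 23], [0, 3, 7, 14], [0, 10, 16, 18],
   [3, 10, 19, 22], [3, 6, 11, 15], [3, 9, 12, 17], [1, 3, 16, 20], [2, 3, 18, 21],
   [0, 6, 13, 21], [0, 8, 12, 20], [0, 4, 9, 22], [0, 5, 11, 19], [4, 7, 12, 18],
   [5, 6, 14, 16], [6, 9, 18, 19], [11, 12, 16, 22], [1, 4, 6, 17], [2, 5, 12, 15],
   [1, 12, 19, 21], [2, 6, 20, 22], [4, 8, 15, 19], [5, 13, 17, 22], [1, 7, 15, 22],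
   [2, 14, 17, 19], [1, 11, 13, 18], [2, 8, 9, 16], [4, 16, 21, 23], [5, 18, 20, 23],
   [1, 5, 8, 10], [2, 4, 10, 13], [1, 9, 14, 23], [2, 7, 11, 23], [4, 11, 14, 20],
   [5, 7, 9, 21], [7, 10, 17, 20], [10, 14, 15, 21], [8, 11, 17, 21], [9, 13, 15, 20],
   [7, 13, 16, 19], [8, 14, 18, 22]]

/-- The block with a given list of labels, as a set of points. -/
def toBlock (l : List ℕ) : Finset (Fin 24) :=
  Finset.univ.filter fun p => p.val ∈ l

theorem mem_toBlock {l : List ℕ} {p : Fin 24} : p ∈ toBlock l ↔ p.val ∈ l := by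
  simp [toBlock]

/-- The cycle lengths of the leave. -/
abbrev cycleLengths : List ℕ := [3, 3, 3, 3, 3, 4, 5]

/-- The label of the first vertex of each cycle. -/
def cycleStart : Fin cycleLengths.length → ℕ := ![0, 3, 6, 9, 12, 15, 19]

/-- The `k`-th vertex of the `i`-th cycle. -/
def cycleVertex (i : Fin cycleLengths.length) (k : ZMod (cycleLengths.get i)) : Fin 24 :=
  Fin.ofNat 24 (cycleStart i + k.val)

/-- The label that follows a given label on its cycle. -/
def nextLabel (n : ℕ) : ℕ :=
  if n ∈ [2, 5, 8, 11, 14] then n - 2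
  else if n = 18 then 15
  else if n = 23 then 19
  else n + 1

instance cycleLengths_neZero (i : Fin cycleLengths.length) : NeZero (cycleLengths.get i) :=
  ⟨by revert i; decide⟩

theorem blockList_pairwise :
    blockList.Pairwise fun l₁ l₂ => (l₁.filter fun n => l₂.contains n).length ≤ 1 := by
  decide +kernel

theorem blockList_card : (blockList.all fun l => (toBlock l).card == 4) = true := by
  decide +kernel

theorem blockList_leave :
    ((List.range 24).all fun p => (List.range 24).all fun q =>
      (p != q && blockList.all fun l => !(l.contains p && l.contains q)) ==
        (q == nextLabel p || p == nextLabel q)) = true := by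
  decide +kernel

theorem cycleVertex_add_one :
    ∀ i k, (cycleVertex i (k + 1)).val = nextLabel (cycleVertex i k).val := by
  decide +kernel

theorem cycleVertex_surjective : ∀ v, ∃ i k, cycleVertex i k = v := by
  decide +kernel

theorem cycleVertex_bijective :
    Function.Bijective
      (fun x : Σ i : Fin cycleLengths.length, ZMod (cycleLengths.get i) =>
        cycleVertex x.1 x.2) := by
  -- Surjectivity suffices, since both sides have 24 elements.
  refine (Fintype.bijective_iff_surjective_and_card _).mpr ⟨?_, ?_⟩
  · exact fun v => let ⟨i, k, hk⟩ := cycleVertex_surjective v; ⟨⟨i, k⟩, hk⟩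
  · rw [Fintype.card_sigma]
    simp only [ZMod.card, Fintype.card_fin]
    decide

theorem card_toBlock {l : List ℕ} (hl : l ∈ blockList) : (toBlock l).card = 4 := by
  simpa using List.all_eq_true.mp blockList_card l hl

/-- Two points common to two lists that share at most one label are equal. -/
theorem eq_of_mem_of_mem {l₁ l₂ : List ℕ}
    (h : (l₁.filter fun n => l₂.contains n).length ≤ 1) {p q : Fin 24}
    (hp₁ : p ∈ toBlock l₁) (hq₁ : q ∈ toBlock l₁)
    (hp₂ : p ∈ toBlock l₂) (hq₂ : q ∈ toBlock l₂) : p = q := by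
  rw [mem_toBlock] at hp₁ hq₁ hp₂ hq₂
  have hp : p.val ∈ l₁.filter fun n => l₂.contains n := by simp [hp₁, hp₂]
  have hq : q.val ∈ l₁.filter fun n => l₂.contains n := by simp [hq₁, hq₂]
  generalize (l₁.filter fun n => l₂.contains n) = l at h hp hq
  match l, h with
  | [], _ => simp at hp
  | [a], _ =>
    rw [List.mem_singleton] at hp hq
    exact Fin.ext (hp.trans hq.symm)

theorem toBlock_pairwise : (blockList.map toBlock).Pairwise fun b₁ b₂ =>
    ∀ p q : Fin 24, p ∈ b₁ → q ∈ b₁ → p ∈ b₂ → q ∈ b₂ → p = q :=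
  List.pairwise_map.mpr <| blockList_pairwise.imp fun h _ _ => eq_of_mem_of_mem h

theorem map_toBlock_nodup : (blockList.map toBlock).Nodup := by
  refine toBlock_pairwise.imp_of_mem fun {b₁ b₂} h₁ _ h he => ?_
  -- A block that equals a later one would have at most one point instead of four.
  obtain ⟨l, hl, rfl⟩ := List.mem_map.mp h₁
  have h_le : (toBlock l).card ≤ 1 :=
    Finset.card_le_one.mpr fun p hp q hq => h p q hp hq (he ▸ hp) (he ▸ hq)
  rw [card_toBlock hl] at h_le
  omega

theorem isPacking_blocks : IsPacking (blockList.map toBlock).toFinset := by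
  simp only [IsPacking, List.mem_toFinset]
  refine ⟨fun b hb => ?_, fun p q hpq b₁ h₁ b₂ h₂ hp₁ hq₁ hp₂ hq₂ => ?_⟩
  · obtain ⟨l, hl, rfl⟩ := List.mem_map.mp hb
    exact card_toBlock hl
  · by_contra hne
    have : Std.Symm fun b₁ b₂ : Finset (Fin 24) =>
        ∀ p q : Fin 24, p ∈ b₁ → q ∈ b₁ → p ∈ b₂ → q ∈ b₂ → p = q :=
      ⟨fun _ _ h p q hp₁ hq₁ hp₂ hq₂ => h p q hp₂ hq₂ hp₁ hq₁⟩
    exact hpq (toBlock_pairwise.forall h₁ h₂ hne p q hp₁ hq₁ hp₂ hq₂)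

theorem leaveAdj_iff (p q : Fin 24) :
    LeaveAdj (blockList.map toBlock).toFinset p q ↔
      q.val = nextLabel p.val ∨ p.val = nextLabel q.val := by
  have h := List.all_eq_true.mp (List.all_eq_true.mp blockList_leave p.val
    (List.mem_range.mpr p.isLt)) q.val (List.mem_range.mpr q.isLt)
  rw [beq_iff_eq, Bool.eq_iff_iff] at h
  simpa [LeaveAdj, mem_toBlock, Fin.ext_iff, or_iff_not_imp_left] using h

theorem exists_edge_iff (p q : Fin 24) :
    (∃ i k, p = cycleVertex i k ∧ q = cycleVertex i (k + 1)) ↔ q.val = nextLabel p.val := by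
  constructor
  · rintro ⟨i, k, rfl, rfl⟩
    exact cycleVertex_add_one i k
  · intro h
    obtain ⟨i, k, rfl⟩ := cycleVertex_surjective p
    exact ⟨i, k, rfl, Fin.ext (h.trans (cycleVertex_add_one i k).symm)⟩

/-- There is a 2-(24,4,1) packing with 42 blocks whose leave is a vertex-disjoint
union of cycles of lengths [3, 3, 3, 3, 3, 4, 5], covering all 24 points. -/
theorem exists_max_packing_with_leave_type :
    ∃ B : Finset (Finset (Fin 24)), IsPacking B ∧ B.card = 42 ∧
      LeaveIsCycleType B [3, 3, 3, 3, 3, 4, 5] := by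
  refine ⟨(blockList.map toBlock).toFinset, isPacking_blocks, ?_,
    cycleVertex, cycleVertex_bijective, fun p q => ?_⟩
  · rw [List.toFinset_card_of_nodup map_toBlock_nodup, List.length_map]
    rfl
  · rw [leaveAdj_iff, ← exists_edge_iff p q, ← exists_edge_iff q p]
    simp only [exists_or]
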